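/- arXiv:1301.0784 — 2 statements merged into one kernel-verified Lean document; each statement's English description precedes it below -/
import Mathlib

section
/- Let G be a connected simple graph on the vertex set [n]. For T ⊆ [n], the prime ideal P_T(G) is a minimal prime of the binomial edge ideal J_G if and only if either T = ∅, or T ≠ ∅ and for each i ∈ T one has c(T∖{i}) < c(T), where c(T) denotes the number of connected components of the induced subgraph of G on [n]∖T. -/
/-!
The proof rests on three facts, valid for every graph, connected or not.

* **`P_T` is prime.** Let `c` send a vertex outside `T` to its component in `G - T`. Then `P_T` is
  the kernel (`ker_torHom`) of the homomorphism `torHom` that sends the variables indexed by `T`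
  to `0` and, for `i ∉ T`, sends `x_i ↦ s_i a_{c i}`, `y_i ↦ s_i`. This map is monomial, and two
  monomials with the same nonzero image are congruent modulo `P_T`
  (`monomial_sub_monomial_mem`): exchanging a factor `x_i y_j` for `x_j y_i` inside a component
  moves the `x`-exponents of the first towards those of the second. So sending an image monomial
  back to the class of a preimage is a `K`-linear left inverse of `S / P_T → K[s, a]`.

* **Every prime `Q ⊇ J_G` contains some `P_S`** (`exists_PT_le`), namely for
  `S = {i | x_i, y_i ∈ Q}`: along a path outside `S` the relations `f_{ij} ∈ Q` compose, because
  at each vertex one of the two variables is nonzero, hence cancellable, modulo `Q`.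

* **`P_S ⊆ P_T`** holds iff `S ⊆ T` and vertices outside `T` that are joined in `G - S` are joined
  in `G - T` (`PT_le_PT_iff`); this is read off from `torHom`.

Hence `P_T` is minimal iff no proper subset `S` of `T` has the last property
(`PT_mem_minimalPrimes_iff`), and it suffices to consider `S = T \ {i}`. Deleting `i` from `T` joins
no two components of `G - T` iff `c(T) ≤ c(T \ {i})` (`ncomp_lt_iff`): the natural map from the
components of `G - T` to those of `G - (T \ {i})` is surjective unless `i` has no neighbour outside
`T`, in which case it is injective.
-/


open MvPolynomial CategoryTheory Opposite

noncomputable section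

namespace BEIPaper

/-- The `x_i` variable of the polynomial ring `K[x_1,…,x_n,y_1,…,y_n]`,
which we realize as `MvPolynomial (σ ⊕ σ) K`, where `Sum.inl i ↦ x_i` and
`Sum.inr i ↦ y_i`. -/
def xv (K : Type) [Field K] {σ : Type} (i : σ) : MvPolynomial (σ ⊕ σ) K :=
  X (Sum.inl i)

/-- The `y_i` variable. -/
def yv (K : Type) [Field K] {σ : Type} (i : σ) : MvPolynomial (σ ⊕ σ) K :=
  X (Sum.inr i)

/-- The binomial edge ideal of a graph `G` on the vertex set `[n]`:
generated by the binomials `x_i y_j - x_j y_i` for edges `{i, j}` with `i < j`. -/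
def bei (K : Type) [Field K] {n : ℕ} (G : SimpleGraph (Fin n)) :
    Ideal (MvPolynomial (Fin n ⊕ Fin n) K) :=
  Ideal.span {f | ∃ i j : Fin n, i < j ∧ G.Adj i j ∧
    f = xv K i * yv K j - xv K j * yv K i}

/-- The prime ideal `P_T(G)`: generated by `{x_i, y_i : i ∈ T}` together with the
binomial edge ideals of the complete graphs on the vertex sets of the connected
components of the induced subgraph of `G` on `[n] ∖ T` (equivalently, all binomials
`x_i y_j - x_j y_i` where `i < j` lie outside `T` in the same connected component). -/
def PT (K : Type) [Field K] {n : ℕ} (G : SimpleGraph (Fin n)) (T : Set (Fin n)) :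
    Ideal (MvPolynomial (Fin n ⊕ Fin n) K) :=
  Ideal.span ((xv K '' T) ∪ (yv K '' T) ∪
    {f | ∃ i j : Fin n, ∃ (hi : i ∈ Tᶜ) (hj : j ∈ Tᶜ), i < j ∧
      (G.induce Tᶜ).Reachable ⟨i, hi⟩ ⟨j, hj⟩ ∧
      f = xv K i * yv K j - xv K j * yv K i})

/-- `c(T)`: the number of connected components of the induced subgraph of `G`
on `[n] ∖ T`. -/
def ncomp {n : ℕ} (G : SimpleGraph (Fin n)) (T : Set (Fin n)) : ℕ :=
  Nat.card (G.induce Tᶜ).ConnectedComponent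

/-- The graded (irrelevant) maximal ideal of a polynomial ring, generated by
all the variables. -/
def mIdeal (K : Type) [Field K] (σ : Type) : Ideal (MvPolynomial σ K) :=
  Ideal.span (Set.range X)

/-- The depth of a module `M` with respect to an ideal `I`: the supremum of lengths
of `M`-regular sequences consisting of elements of `I`. -/
def depth {R : Type} [CommRing R] (I : Ideal R) (M : Type) [AddCommGroup M]
    [Module R M] : ℕ∞ :=
  sSup {k : ℕ∞ | ∃ rs : List R, (rs.length : ℕ∞) = k ∧ (∀ r ∈ rs, r ∈ I) ∧
    RingTheory.Sequence.IsRegular M rs}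

/-- The (Krull) dimension of a module: the Krull dimension of `R` modulo the
annihilator of `M`. -/
def mdim (R : Type) [CommRing R] (M : Type) [AddCommGroup M] [Module R M] :
    WithBot ℕ∞ :=
  ringKrullDim (R ⧸ Module.annihilator R M)

/-- `M` is a Cohen-Macaulay `R`-module of dimension `d` (depth and dimension both
being taken with respect to the given (maximal graded) ideal `I`). -/
def IsCMmodOfDim {R : Type} [CommRing R] (I : Ideal R) (M : Type) [AddCommGroup M]
    [Module R M] (d : ℕ) : Prop :=
  (depth I M : WithBot ℕ∞) = mdim R M ∧ mdim R M = (d : ℕ∞)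

/-- The quotient `S/J` of a polynomial ring `S` by an ideal `J` is a Cohen-Macaulay
ring: its depth with respect to the graded maximal ideal equals its Krull dimension. -/
def IsCMQuot (K : Type) [Field K] {σ : Type} (J : Ideal (MvPolynomial σ K)) : Prop :=
  (depth (mIdeal K σ) (MvPolynomial σ K ⧸ J) : WithBot ℕ∞) =
    ringKrullDim (MvPolynomial σ K ⧸ J)

/-- `S/I` is approximately Cohen-Macaulay: there is a homogeneous element `x` of
positive degree in the irrelevant ideal of `R = S/I` (i.e. the image of a homogeneous
polynomial `f` of positive degree) such that `R/x^m R = S/(I + (f^m))` is a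
Cohen-Macaulay ring of dimension `dim R - 1` for all `m ≥ 1`. -/
def IsACM (K : Type) [Field K] {σ : Type} (I : Ideal (MvPolynomial σ K)) : Prop :=
  ∃ (d : ℕ) (f : MvPolynomial σ K), 0 < d ∧ f.IsHomogeneous d ∧
    ∀ m : ℕ, 1 ≤ m →
      IsCMQuot K (I ⊔ Ideal.span {f ^ m}) ∧
      ringKrullDim (MvPolynomial σ K ⧸ (I ⊔ Ideal.span {f ^ m})) + 1 =
        ringKrullDim (MvPolynomial σ K ⧸ I)

/-- The Hilbert series of `S/I` (for a homogeneous ideal `I`), as a power series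
over `ℤ`: the `m`-th coefficient is the `K`-dimension of the degree-`m` graded
component of `S/I`, i.e. of the image of the space of degree-`m` homogeneous
polynomials in `S/I`. -/
def hseries (K : Type) [Field K] {σ : Type} (I : Ideal (MvPolynomial σ K)) :
    PowerSeries ℤ :=
  PowerSeries.mk fun m =>
    (Module.finrank K (Submodule.map (Ideal.Quotient.mkₐ K I).toLinearMap
      (homogeneousSubmodule σ K m)) : ℤ)

/-- The formal power series variable `t`. -/
def t : PowerSeries ℤ := PowerSeries.X

/-- The equidimensional part `U_S(I)` of (a minimal primary decomposition of) `I`: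
the intersection of the primary components `I(p)` over the associated primes `p`
with `dim S/p = dim S/I`.  Any such `p` is a minimal prime of `I`, so its primary
component is independent of the decomposition and equals the saturation
`{x | ∃ s ∉ p, s * x ∈ I}`. -/
def USideal {R : Type} [CommRing R] (I : Ideal R) : Ideal R :=
  sInf {J | ∃ p ∈ associatedPrimes R (R ⧸ I),
    ringKrullDim (R ⧸ p) = ringKrullDim (R ⧸ I) ∧
    J = Ideal.span {x | ∃ s ∉ p, s * x ∈ I}}

/-- `Ext_S^j(S/I, S)`, as an object of `ModuleCat S`.  The `i`-th module of
deficiency of `S/I` is `ω^i(S/I) = Ext_S^{2n-i}(S/I, S)`, i.e. `extSI K I (2*n - i)`. -/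
def extSI (K : Type) [Field K] {σ : Type} (I : Ideal (MvPolynomial σ K)) (j : ℕ) :
    ModuleCat (MvPolynomial σ K) :=
  ((Ext (MvPolynomial σ K) (ModuleCat (MvPolynomial σ K)) j).obj
      (op (ModuleCat.of (MvPolynomial σ K) (MvPolynomial σ K ⧸ I)))).obj
    (ModuleCat.of (MvPolynomial σ K) (MvPolynomial σ K))

/-- The line (path) graph on `[n]` (with `[n]` realized as `Fin n`), with edges
`{i, i+1}` for `1 ≤ i ≤ n-1`. -/
def lineG (n : ℕ) : SimpleGraph (Fin n) :=
  SimpleGraph.fromRel (fun a b => (b : ℕ) = (a : ℕ) + 1)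

/-- The cycle of length `n` on `[n]` (with `[n]` realized as `Fin n`), with edges
`{i, i+1}` for `1 ≤ i ≤ n-1` together with `{1, n}`. -/
def cycleG (n : ℕ) : SimpleGraph (Fin n) :=
  SimpleGraph.fromRel (fun a b =>
    (b : ℕ) = (a : ℕ) + 1 ∨ ((a : ℕ) = 0 ∧ (b : ℕ) = n - 1))

/-- The binomial `g = x_1 y_n - x_n y_1`. -/
def gElt (K : Type) [Field K] {n : ℕ} (hn : 0 < n) : MvPolynomial (Fin n ⊕ Fin n) K :=
  xv K ⟨0, hn⟩ * yv K ⟨n - 1, by omega⟩ - xv K ⟨n - 1, by omega⟩ * yv K ⟨0, hn⟩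

/-- The `i`-th generator `x_2 x_3 ⋯ x_i y_{i+1} ⋯ y_{n-1}` (for `i = 1, …, n-1`)
of the monomial ideal `M`; the product ranges over the labels `p = 2, …, n-1`
(`0`-indexed: `q = p - 1` with `1 ≤ q ≤ n-2`), taking `x_p` when `p ≤ i` and
`y_p` when `p > i`. -/
def mgen (K : Type) [Field K] (n : ℕ) (i : ℕ) : MvPolynomial (Fin n ⊕ Fin n) K :=
  ∏ q ∈ Finset.univ.filter (fun q : Fin n => 0 < (q : ℕ) ∧ (q : ℕ) < n - 1),
    (if (q : ℕ) + 1 ≤ i then xv K q else yv K q)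

/-- The monomial ideal
`M = (x_2 x_3 ⋯ x_{n-1}, x_2 x_3 ⋯ x_{n-2} y_{n-1}, …, x_2 y_3 ⋯ y_{n-1}, y_2 y_3 ⋯ y_{n-1})`. -/
def monoM (K : Type) [Field K] (n : ℕ) : Ideal (MvPolynomial (Fin n ⊕ Fin n) K) :=
  Ideal.span {f | ∃ i : ℕ, 1 ≤ i ∧ i ≤ n - 1 ∧ f = mgen K n i}

/-- The degree of a vertex, as the cardinality of its neighbor set. -/
def deg {n : ℕ} (G : SimpleGraph (Fin n)) (v : Fin n) : ℕ :=
  Nat.card (G.neighborSet v)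

/-- A tree is 3-star like if no vertex has degree `≥ 4`, and either there is at most
one vertex of degree `3`, or there are exactly two vertices of degree `3` and they
are joined by an edge. -/
def ThreeStarLike {n : ℕ} (G : SimpleGraph (Fin n)) : Prop :=
  (∀ v, deg G v ≤ 3) ∧
    ({v | deg G v = 3}.Subsingleton ∨
      ∃ a b : Fin n, a ≠ b ∧ G.Adj a b ∧ {v | deg G v = 3} = {a, b})

/-- The graph `G′` on `[n+1]` obtained from a graph `G` on `[n]` by attaching the
new edge `{v, n+1}` at the vertex `v` of `G`. -/
def extendG {n : ℕ} (G : SimpleGraph (Fin n)) (v : Fin n) : SimpleGraph (Fin (n + 1)) :=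
  SimpleGraph.fromRel (fun a b =>
    (∃ (ha : a ≠ Fin.last n) (hb : b ≠ Fin.last n),
      G.Adj (a.castPred ha) (b.castPred hb)) ∨
    (a = Fin.castSucc v ∧ b = Fin.last n))

/-- The inclusion `S = K[x_1,…,x_n,y_1,…,y_n] → S′ = K[x_1,…,x_{n+1},y_1,…,y_{n+1}]`. -/
def liftS (K : Type) [Field K] (n : ℕ) :
    MvPolynomial (Fin n ⊕ Fin n) K →ₐ[K] MvPolynomial (Fin (n + 1) ⊕ Fin (n + 1)) K :=
  rename (Sum.map Fin.castSucc Fin.castSucc)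

/-! ### The toric parametrization -/

/-- The exponent of the monomial to which a variable is sent by the parametrization
`x_i ↦ s_i a_{c i}`, `y_i ↦ s_i`; here `Sum.inl i` indexes `s_i` and `Sum.inr k` indexes `a_k`. -/
def torExp {σ C : Type} (c : σ → C) : σ ⊕ σ → (σ ⊕ C →₀ ℕ) :=
  Sum.elim (fun i => Finsupp.single (Sum.inl i) 1 + Finsupp.single (Sum.inr (c i)) 1)
    (fun i => Finsupp.single (Sum.inl i) 1)

/-- The additive map sending an exponent of a monomial in `x, y` to the exponent of its image under
the parametrization. -/
def torE {σ C : Type} (c : σ → C) : (σ ⊕ σ →₀ ℕ) →ₗ[ℕ] (σ ⊕ C →₀ ℕ) :=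
  Finsupp.linearCombination ℕ (torExp c)

/-- The vertex underlying one of the variables `x_i`, `y_i`. -/
def vtx {σ : Type} : σ ⊕ σ → σ := Sum.elim id id

open Classical in
/-- The homomorphism `x_i ↦ s_i a_{c i}`, `y_i ↦ s_i` for `i ∉ T`, and `x_i, y_i ↦ 0` for
`i ∈ T`. -/
def torHom (K : Type) [Field K] {σ C : Type} (c : σ → C) (T : Set σ) :
    MvPolynomial (σ ⊕ σ) K →ₐ[K] MvPolynomial (σ ⊕ C) K :=
  aeval (fun k => if vtx k ∈ T then 0 else monomial (torExp c k) 1)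

section Toric

variable {K : Type} [Field K] {σ C : Type} {c : σ → C} {T : Set σ}

lemma torHom_monomial {d : σ ⊕ σ →₀ ℕ} (hd : ∀ k, vtx k ∈ T → d k = 0) :
    torHom K c T (monomial d 1) = monomial (torE c d) 1 := by
  classical
  rw [torHom, aeval_monomial, map_one, one_mul, torE, Finsupp.linearCombination_apply,
    Finsupp.sum, monomial_sum_one, Finsupp.prod]
  refine Finset.prod_congr rfl fun k hk => ?_
  have hT : vtx k ∉ T := fun h => (Finsupp.mem_support_iff.1 hk) (hd k h)
  rw [if_neg hT, monomial_pow, one_pow]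

lemma torHom_monomial_eq_zero {d : σ ⊕ σ →₀ ℕ} {k : σ ⊕ σ} (hk : vtx k ∈ T) (hd : d k ≠ 0) :
    torHom K c T (monomial d 1) = 0 := by
  classical
  rw [torHom, aeval_monomial, map_one, one_mul, Finsupp.prod]
  refine Finset.prod_eq_zero (Finsupp.mem_support_iff.2 hd) ?_
  rw [if_pos hk, zero_pow hd]

lemma torE_inl [Fintype σ] (d : σ ⊕ σ →₀ ℕ) (i : σ) :
    torE c d (Sum.inl i) = d (Sum.inl i) + d (Sum.inr i) := by
  classical
  rw [torE, Finsupp.linearCombination_apply, Finsupp.sum_fintype _ _ (by simp),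
    Fintype.sum_sum_type]
  simp [torExp, Finsupp.single_apply]

lemma torE_inr [Fintype σ] [DecidableEq C] (d : σ ⊕ σ →₀ ℕ) (k : C) :
    torE c d (Sum.inr k) = ∑ i with c i = k, d (Sum.inl i) := by
  classical
  rw [torE, Finsupp.linearCombination_apply, Finsupp.sum_fintype _ _ (by simp),
    Fintype.sum_sum_type]
  simp [torExp, Finsupp.single_apply, Finset.sum_filter]

/-- Two monomials off `T` with the same image under the parametrization are congruent modulo any
ideal containing the binomials `f_{ij}` with `i, j ∉ T` and `c i = c j`. The induction is on the
total excess of the `x`-exponents of the first monomial over those of the second. -/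
lemma monomial_sub_monomial_mem [Fintype σ] {I : Ideal (MvPolynomial (σ ⊕ σ) K)}
    (hI : ∀ i j, i ∉ T → j ∉ T → c i = c j → xv K i * yv K j - xv K j * yv K i ∈ I)
    (N : ℕ) : ∀ d d' : σ ⊕ σ →₀ ℕ, (∀ k, vtx k ∈ T → d k = 0) → (∀ k, vtx k ∈ T → d' k = 0) →
      torE c d = torE c d' → ∑ i, (d (Sum.inl i) - d' (Sum.inl i)) ≤ N →
      (monomial d 1 - monomial d' 1 : MvPolynomial (σ ⊕ σ) K) ∈ I := by
  classical
  induction N with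
  | zero =>
    intro d d' hd hd' he hN
    have hle : ∀ i, d (Sum.inl i) ≤ d' (Sum.inl i) := by
      intro i
      have := (Finset.sum_eq_zero_iff.1 (Nat.le_zero.1 hN)) i (Finset.mem_univ i)
      omega
    have heq : ∀ i, d (Sum.inl i) = d' (Sum.inl i) := by
      intro i
      have h1 := DFunLike.congr_fun he (Sum.inr (c i))
      rw [torE_inr, torE_inr] at h1
      exact (Finset.sum_eq_sum_iff_of_le fun j _ => hle j).1 h1 i (by simp)
    have : d = d' := by
      ext k
      rcases k with i | i
      · exact heq i
      · have h1 := DFunLike.congr_fun he (Sum.inl i)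
        rw [torE_inl, torE_inl] at h1
        have := heq i
        omega
    simp [this]
  | succ N ih =>
    intro d d' hd hd' he hN
    by_cases hle : ∑ i, (d (Sum.inl i) - d' (Sum.inl i)) ≤ N
    · exact ih d d' hd hd' he hle
    obtain ⟨i, -, hi⟩ : ∃ i ∈ Finset.univ, d (Sum.inl i) - d' (Sum.inl i) ≠ 0 :=
      Finset.exists_ne_zero_of_sum_ne_zero (by omega)
    have hi' : d' (Sum.inl i) < d (Sum.inl i) := by omega
    obtain ⟨j, hcj, hj⟩ : ∃ j, c j = c i ∧ d (Sum.inl j) < d' (Sum.inl j) := by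
      by_contra! hcon
      have h1 := DFunLike.congr_fun he (Sum.inr (c i))
      rw [torE_inr, torE_inr] at h1
      have := (Finset.sum_eq_sum_iff_of_le (s := Finset.univ.filter fun j => c j = c i)
        (f := fun j => d' (Sum.inl j)) (g := fun j => d (Sum.inl j))
        fun j hj => hcon j (by simpa using hj)).1 h1.symm i (by simp)
      omega
    have hij : i ≠ j := by rintro rfl; omega
    have hiT : i ∉ T := fun h => by
      have := hd (Sum.inl i) h
      omega
    have hjT : j ∉ T := fun h => by
      have := hd' (Sum.inl j) h
      omega
    have hyj : 0 < d (Sum.inr j) := by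
      have h1 := DFunLike.congr_fun he (Sum.inl j)
      rw [torE_inl, torE_inl] at h1
      omega
    obtain ⟨r, hr⟩ : ∃ r : σ ⊕ σ →₀ ℕ,
        d = r + (Finsupp.single (Sum.inl i) 1 + Finsupp.single (Sum.inr j) 1) := by
      refine ⟨d - (Finsupp.single (Sum.inl i) 1 + Finsupp.single (Sum.inr j) 1),
        (tsub_add_cancel_of_le ?_).symm⟩
      intro k
      rcases k with k | k
      · by_cases h : i = k
        · subst h; simp; omega
        · simp [h]
      · by_cases h : j = k
        · subst h; simp; omega
        · simp [h]
    set d'' : σ ⊕ σ →₀ ℕ :=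
      r + (Finsupp.single (Sum.inl j) 1 + Finsupp.single (Sum.inr i) 1) with hd''
    have hstep : (monomial d 1 - monomial d'' 1 : MvPolynomial (σ ⊕ σ) K) ∈ I := by
      have : (monomial d 1 - monomial d'' 1 : MvPolynomial (σ ⊕ σ) K) =
          monomial r 1 * (xv K i * yv K j - xv K j * yv K i) := by
        simp only [hr, hd'', xv, yv, X, monomial_mul, mul_sub, one_mul]
      rw [this]
      exact I.mul_mem_left _ (hI i j hiT hjT hcj.symm)
    have hrest : (monomial d'' 1 - monomial d' 1 : MvPolynomial (σ ⊕ σ) K) ∈ I := by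
      refine ih d'' d' ?_ hd' ?_ ?_
      · intro k hk
        have h0 := hd k hk
        rw [hr] at h0
        have hki : vtx k ≠ i := fun h => hiT (h ▸ hk)
        have hkj : vtx k ≠ j := fun h => hjT (h ▸ hk)
        rcases k with k | k
        · have h1 : j ≠ k := fun h => hkj h.symm
          simp at h0
          simp [hd'', h0.1, h1]
        · have h1 : i ≠ k := fun h => hki h.symm
          simp at h0
          simp [hd'', h0.1, h1]
      · rw [← he, hr, hd'', map_add, map_add]
        simp only [torE, map_add, Finsupp.linearCombination_single, one_smul, torExp,
          Sum.elim_inl, Sum.elim_inr, hcj]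
        abel
      · have hlt : ∑ k, (d'' (Sum.inl k) - d' (Sum.inl k)) <
            ∑ k, (d (Sum.inl k) - d' (Sum.inl k)) := by
          have hdi : d (Sum.inl i) = d'' (Sum.inl i) + 1 := by
            rw [hr, hd'']; simp [hij.symm]
          have hdj : d'' (Sum.inl j) = d (Sum.inl j) + 1 := by
            rw [hr, hd'']; simp [hij]
          refine Finset.sum_lt_sum (fun k _ => ?_) ⟨i, Finset.mem_univ i, by omega⟩
          by_cases hkj : k = j
          · subst hkj; omega
          by_cases hki : k = i
          · subst hki; omega
          have : d'' (Sum.inl k) = d (Sum.inl k) := by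
            rw [hr, hd'']; simp [Ne.symm hkj, Ne.symm hki]
          rw [this]
        omega
    have := I.add_mem hstep hrest
    rwa [sub_add_sub_cancel] at this

/-- The kernel of the parametrization lies in every ideal that contains the variables indexed by
`T` and the binomials `f_{ij}` with `i, j ∉ T`, `c i = c j`. -/
lemma ker_torHom_le [Fintype σ] {I : Ideal (MvPolynomial (σ ⊕ σ) K)}
    (hI : ∀ i j, i ∉ T → j ∉ T → c i = c j → xv K i * yv K j - xv K j * yv K i ∈ I)
    (hT : ∀ k, vtx k ∈ T → (X k : MvPolynomial (σ ⊕ σ) K) ∈ I) :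
    RingHom.ker (torHom K c T) ≤ I := by
  classical
  -- `ψ` sends the image of a monomial off `T` back to the class of some monomial with that image.
  let g : (σ ⊕ C →₀ ℕ) → MvPolynomial (σ ⊕ σ) K ⧸ I := fun e =>
    if h : ∃ d : σ ⊕ σ →₀ ℕ, (∀ k, vtx k ∈ T → d k = 0) ∧ torE c d = e then
      Ideal.Quotient.mkₐ K I (monomial h.choose 1) else 0
  let ψ : MvPolynomial (σ ⊕ C) K →ₗ[K] MvPolynomial (σ ⊕ σ) K ⧸ I :=
    (basisMonomials (σ ⊕ C) K).constr K g
  have hψ : ∀ e, ψ (monomial e 1) = g e := fun e => by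
    have := (basisMonomials (σ ⊕ C) K).constr_basis K g e
    rwa [coe_basisMonomials] at this
  have key : ψ ∘ₗ (torHom K c T).toLinearMap = (Ideal.Quotient.mkₐ K I).toLinearMap := by
    refine (basisMonomials (σ ⊕ σ) K).ext fun d => ?_
    rw [coe_basisMonomials]
    simp only [LinearMap.comp_apply, AlgHom.toLinearMap_apply]
    by_cases hd : ∀ k, vtx k ∈ T → d k = 0
    · rw [torHom_monomial hd, hψ]
      have h : ∃ d' : σ ⊕ σ →₀ ℕ, (∀ k, vtx k ∈ T → d' k = 0) ∧ torE c d' = torE c d :=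
        ⟨d, hd, rfl⟩
      simp only [g, dif_pos h]
      exact Ideal.Quotient.eq.2
        (monomial_sub_monomial_mem hI _ _ _ h.choose_spec.1 hd h.choose_spec.2 le_rfl)
    · push Not at hd
      obtain ⟨k, hk, hdk⟩ := hd
      rw [torHom_monomial_eq_zero hk hdk, map_zero]
      refine (Ideal.Quotient.eq_zero_iff_mem.2 ?_).symm
      refine I.mem_of_dvd ?_ (hT k hk)
      rw [X_dvd_monomial]
      exact Or.inr hdk
  intro p hp
  have h1 := LinearMap.congr_fun key p
  simp only [LinearMap.comp_apply, AlgHom.toLinearMap_apply] at h1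
  rw [(RingHom.mem_ker).1 hp, map_zero] at h1
  exact Ideal.Quotient.eq_zero_iff_mem.1 h1.symm

lemma torHom_X_eq_zero_iff (k : σ ⊕ σ) : torHom K c T (X k) = 0 ↔ vtx k ∈ T := by
  classical
  rw [torHom, aeval_X]
  split_ifs with h <;> simp [h]

lemma torHom_binomial_eq_zero_iff {i j : σ} (hi : i ∉ T) (hj : j ∉ T) :
    torHom K c T (xv K i * yv K j - xv K j * yv K i) = 0 ↔ c i = c j := by
  classical
  have hx : ∀ k, k ∉ T → torHom K c T (xv K k) = X (Sum.inl k) * X (Sum.inr (c k)) := by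
    intro k hk
    rw [xv, torHom, aeval_X, if_neg (by exact hk)]
    simp [torExp, X, monomial_mul]
  have hy : ∀ k, k ∉ T → torHom K c T (yv K k) = X (Sum.inl k) := by
    intro k hk
    rw [yv, torHom, aeval_X, if_neg (by exact hk)]
    simp [torExp, X]
  have : torHom K c T (xv K i * yv K j - xv K j * yv K i) =
      X (Sum.inl i) * X (Sum.inl j) * (X (Sum.inr (c i)) - X (Sum.inr (c j))) := by
    rw [map_sub, map_mul, map_mul, hx i hi, hx j hj, hy i hi, hy j hj]
    ring
  rw [this, mul_eq_zero, or_iff_right (mul_ne_zero (X_ne_zero _) (X_ne_zero _)), sub_eq_zero,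
    (X_injective (R := K)).eq_iff, Sum.inr.injEq]

end Toric

/-! ### The ideals `P_T` -/

section Primes

variable {K : Type} [Field K] {n : ℕ} {G : SimpleGraph (Fin n)}

/-- `i` and `j` lie outside `T` in the same component of `G - T`. -/
def Joined (G : SimpleGraph (Fin n)) (T : Set (Fin n)) (i j : Fin n) : Prop :=
  ∃ (hi : i ∈ Tᶜ) (hj : j ∈ Tᶜ), (G.induce Tᶜ).Reachable ⟨i, hi⟩ ⟨j, hj⟩

open Classical in
/-- The component of `G - T` containing a vertex, with the value `none` on `T`. -/
def compOf (G : SimpleGraph (Fin n)) (T : Set (Fin n)) (i : Fin n) :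
    Option (G.induce Tᶜ).ConnectedComponent :=
  if h : i ∈ Tᶜ then some ((G.induce Tᶜ).connectedComponentMk ⟨i, h⟩) else none

lemma compOf_eq_iff {T : Set (Fin n)} {i j : Fin n} (hi : i ∉ T) (hj : j ∉ T) :
    compOf G T i = compOf G T j ↔ Joined G T i j := by
  have hi' : i ∈ Tᶜ := hi
  have hj' : j ∈ Tᶜ := hj
  rw [compOf, compOf, dif_pos hi', dif_pos hj', Option.some_inj,
    SimpleGraph.ConnectedComponent.eq]
  exact ⟨fun h => ⟨hi', hj', h⟩, fun ⟨_, _, h⟩ => h⟩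

lemma Joined.symm {T : Set (Fin n)} {i j : Fin n} (h : Joined G T i j) : Joined G T j i := by
  obtain ⟨hi, hj, h⟩ := h
  exact ⟨hj, hi, h.symm⟩

lemma Joined.mono {S T : Set (Fin n)} (hST : S ⊆ T) {i j : Fin n} (h : Joined G T i j) :
    Joined G S i j := by
  obtain ⟨hi, hj, h⟩ := h
  exact ⟨fun a => hi (hST a), fun a => hj (hST a),
    h.map (SimpleGraph.induceHomOfLE G (Set.compl_subset_compl.2 hST)).toHom⟩

/-- Induction along a path in `G - T` starting at `i`. -/
lemma Joined.induct {T : Set (Fin n)} {i : Fin n} (P : Fin n → Prop) (h0 : i ∉ T → P i)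
    (hs : ∀ j k, j ∉ T → k ∉ T → G.Adj j k → P j → P k) {j : Fin n} (h : Joined G T i j) :
    P j := by
  obtain ⟨hi, hj, h⟩ := h
  rw [SimpleGraph.reachable_iff_reflTransGen] at h
  have : ∀ w : (Tᶜ : Set (Fin n)),
      Relation.ReflTransGen (G.induce Tᶜ).Adj ⟨i, hi⟩ w → P w := by
    intro w hw
    induction hw with
    | refl => exact h0 hi
    | @tail v w _ hadj ih => exact hs v w v.2 w.2 hadj ih
  exact this _ h

lemma binomial_mem_PT {T : Set (Fin n)} {i j : Fin n} (h : Joined G T i j) :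
    xv K i * yv K j - xv K j * yv K i ∈ PT K G T := by
  rcases lt_trichotomy i j with hij | rfl | hij
  · obtain ⟨hi, hj, h⟩ := h
    exact Ideal.subset_span (Or.inr ⟨i, j, hi, hj, hij, h, rfl⟩)
  · simp
  · obtain ⟨hj, hi, h⟩ := h.symm
    rw [← neg_mem_iff, neg_sub]
    exact Ideal.subset_span (Or.inr ⟨j, i, hj, hi, hij, h, rfl⟩)

lemma X_mem_PT {T : Set (Fin n)} {k : Fin n ⊕ Fin n} (hk : vtx k ∈ T) :
    (X k : MvPolynomial (Fin n ⊕ Fin n) K) ∈ PT K G T := by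
  rcases k with k | k
  · exact Ideal.subset_span (Or.inl (Or.inl ⟨k, hk, rfl⟩))
  · exact Ideal.subset_span (Or.inl (Or.inr ⟨k, hk, rfl⟩))

lemma PT_le_iff {T : Set (Fin n)} {I : Ideal (MvPolynomial (Fin n ⊕ Fin n) K)} :
    PT K G T ≤ I ↔ (∀ i ∈ T, xv K i ∈ I ∧ yv K i ∈ I) ∧
      ∀ i j, Joined G T i j → xv K i * yv K j - xv K j * yv K i ∈ I := by
  constructor
  · intro h
    exact ⟨fun i hi => ⟨h (X_mem_PT (k := Sum.inl i) hi), h (X_mem_PT (k := Sum.inr i) hi)⟩,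
      fun i j hij => h (binomial_mem_PT hij)⟩
  · rintro ⟨h1, h2⟩
    refine Ideal.span_le.2 ?_
    rintro f ((⟨i, hi, rfl⟩ | ⟨i, hi, rfl⟩) | ⟨i, j, hi, hj, -, h, rfl⟩)
    · exact (h1 i hi).1
    · exact (h1 i hi).2
    · exact h2 i j ⟨hi, hj, h⟩

lemma ker_torHom (T : Set (Fin n)) :
    RingHom.ker (torHom K (compOf G T) T) = PT K G T := by
  refine le_antisymm (ker_torHom_le (fun i j hi hj h => ?_) fun k hk => X_mem_PT hk) ?_
  · exact binomial_mem_PT ((compOf_eq_iff hi hj).1 h)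
  · refine PT_le_iff.2 ⟨fun i hi => ?_, fun i j h => ?_⟩
    · exact ⟨(torHom_X_eq_zero_iff (Sum.inl i)).2 hi, (torHom_X_eq_zero_iff (Sum.inr i)).2 hi⟩
    · have hi : i ∉ T := h.1
      have hj : j ∉ T := h.2.1
      exact (torHom_binomial_eq_zero_iff hi hj).2 ((compOf_eq_iff hi hj).2 h)

lemma PT_isPrime (T : Set (Fin n)) : (PT K G T).IsPrime := by
  rw [← ker_torHom]
  exact RingHom.ker_isPrime _

lemma X_mem_PT_iff {T : Set (Fin n)} {k : Fin n ⊕ Fin n} :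
    (X k : MvPolynomial (Fin n ⊕ Fin n) K) ∈ PT K G T ↔ vtx k ∈ T := by
  rw [← ker_torHom, RingHom.mem_ker]
  exact torHom_X_eq_zero_iff k

lemma binomial_mem_PT_iff {T : Set (Fin n)} {i j : Fin n} (hi : i ∉ T) (hj : j ∉ T) :
    xv K i * yv K j - xv K j * yv K i ∈ PT K G T ↔ Joined G T i j := by
  rw [← ker_torHom, RingHom.mem_ker, ← compOf_eq_iff hi hj]
  exact torHom_binomial_eq_zero_iff hi hj

lemma binomial_mem_of_left {I : Ideal (MvPolynomial (Fin n ⊕ Fin n) K)} {i j : Fin n}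
    (hx : xv K i ∈ I) (hy : yv K i ∈ I) : xv K i * yv K j - xv K j * yv K i ∈ I :=
  I.sub_mem (I.mul_mem_right _ hx) (I.mul_mem_left _ hy)

lemma binomial_mem_of_right {I : Ideal (MvPolynomial (Fin n ⊕ Fin n) K)} {i j : Fin n}
    (hx : xv K j ∈ I) (hy : yv K j ∈ I) : xv K i * yv K j - xv K j * yv K i ∈ I :=
  I.sub_mem (I.mul_mem_left _ hy) (I.mul_mem_right _ hx)

/-- `P_S ⊆ P_T` iff `S ⊆ T` and passing from `G - S` to `G - T` separates no two vertices
outside `T`. -/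
lemma PT_le_PT_iff {S T : Set (Fin n)} :
    PT K G S ≤ PT K G T ↔
      S ⊆ T ∧ ∀ i j, i ∉ T → j ∉ T → Joined G S i j → Joined G T i j := by
  rw [PT_le_iff]
  constructor
  · rintro ⟨h1, h2⟩
    exact ⟨fun i hi => (X_mem_PT_iff (k := Sum.inl i)).1 (h1 i hi).1,
      fun i j hi hj h => (binomial_mem_PT_iff hi hj).1 (h2 i j h)⟩
  · rintro ⟨h1, h2⟩
    have hv : ∀ i ∈ T, xv K i ∈ PT K G T ∧ yv K i ∈ PT K G T := fun i hi =>
      ⟨X_mem_PT (k := Sum.inl i) hi, X_mem_PT (k := Sum.inr i) hi⟩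
    refine ⟨fun i hi => hv i (h1 hi), fun i j h => ?_⟩
    by_cases hi : i ∈ T
    · exact binomial_mem_of_left (hv i hi).1 (hv i hi).2
    by_cases hj : j ∈ T
    · exact binomial_mem_of_right (hv j hj).1 (hv j hj).2
    exact binomial_mem_PT (h2 i j hi hj h)

lemma binomial_mem_of_adj {Q : Ideal (MvPolynomial (Fin n ⊕ Fin n) K)} (hQ : bei K G ≤ Q)
    {i j : Fin n} (h : G.Adj i j) : xv K i * yv K j - xv K j * yv K i ∈ Q := by
  rcases lt_or_gt_of_ne h.ne with hij | hij
  · exact hQ (Ideal.subset_span ⟨i, j, hij, h, rfl⟩)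
  · rw [← neg_mem_iff, neg_sub]
    exact hQ (Ideal.subset_span ⟨j, i, hij, h.symm, rfl⟩)

lemma bei_le_PT (T : Set (Fin n)) : bei K G ≤ PT K G T := by
  refine Ideal.span_le.2 ?_
  rintro f ⟨i, j, -, h, rfl⟩
  have hv : ∀ i ∈ T, xv K i ∈ PT K G T ∧ yv K i ∈ PT K G T := fun i hi =>
    ⟨X_mem_PT (k := Sum.inl i) hi, X_mem_PT (k := Sum.inr i) hi⟩
  by_cases hi : i ∈ T
  · exact binomial_mem_of_left (hv i hi).1 (hv i hi).2
  by_cases hj : j ∈ T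
  · exact binomial_mem_of_right (hv j hj).1 (hv j hj).2
  have hadj : (G.induce Tᶜ).Adj ⟨i, hi⟩ ⟨j, hj⟩ := h
  exact binomial_mem_PT ⟨hi, hj, hadj.reachable⟩

/-- Every prime ideal containing `J_G` contains one of the ideals `P_S`. -/
lemma exists_PT_le {Q : Ideal (MvPolynomial (Fin n ⊕ Fin n) K)} [hQp : Q.IsPrime]
    (hQ : bei K G ≤ Q) : ∃ S, PT K G S ≤ Q := by
  refine ⟨{i | xv K i ∈ Q ∧ yv K i ∈ Q}, PT_le_iff.2 ⟨fun i hi => hi, fun i j h => ?_⟩⟩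
  refine h.induct (fun j => xv K i * yv K j - xv K j * yv K i ∈ Q) (fun _ => by simp) ?_
  intro j k hj _ hjk hij
  have hjk' := binomial_mem_of_adj hQ hjk
  -- `x_j f_{ik}` and `y_j f_{ik}` are combinations of `f_{ij}` and `f_{jk}`.
  by_cases hx : xv K j ∈ Q
  · have hy : yv K j ∉ Q := fun hy => hj ⟨hx, hy⟩
    refine (hQp.mem_or_mem (x := yv K j) ?_).resolve_left hy
    have : yv K j * (xv K i * yv K k - xv K k * yv K i) =
        yv K k * (xv K i * yv K j - xv K j * yv K i) +
        yv K i * (xv K j * yv K k - xv K k * yv K j) := by ring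
    rw [this]
    exact Q.add_mem (Q.mul_mem_left _ hij) (Q.mul_mem_left _ hjk')
  · refine (hQp.mem_or_mem (x := xv K j) ?_).resolve_left hx
    have : xv K j * (xv K i * yv K k - xv K k * yv K i) =
        xv K k * (xv K i * yv K j - xv K j * yv K i) +
        xv K i * (xv K j * yv K k - xv K k * yv K j) := by ring
    rw [this]
    exact Q.add_mem (Q.mul_mem_left _ hij) (Q.mul_mem_left _ hjk')

lemma PT_mem_minimalPrimes_iff {T : Set (Fin n)} :
    PT K G T ∈ (bei K G).minimalPrimes ↔ ∀ S, PT K G S ≤ PT K G T → S = T := by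
  constructor
  · intro h S hS
    have h2 : PT K G T ≤ PT K G S := h.2 ⟨PT_isPrime S, bei_le_PT S⟩ hS
    exact (PT_le_PT_iff.1 hS).1.antisymm (PT_le_PT_iff.1 h2).1
  · intro h
    refine ⟨⟨PT_isPrime T, bei_le_PT T⟩, ?_⟩
    rintro Q ⟨hQp, hQ⟩ hQT
    obtain ⟨S, hS⟩ := exists_PT_le hQ
    rwa [h S (hS.trans hQT)] at hS

end Primes

/-! ### Deleting one vertex from `T` -/

section Components

variable {n : ℕ} {G : SimpleGraph (Fin n)} {T : Set (Fin n)}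

/-- The map from the components of `G - T` to those of `G - (T \ {i})` induced by inclusion. -/
def compMap (G : SimpleGraph (Fin n)) (T : Set (Fin n)) (i : Fin n) :
    (G.induce Tᶜ).ConnectedComponent → (G.induce (T \ {i})ᶜ).ConnectedComponent :=
  SimpleGraph.ConnectedComponent.map
    (SimpleGraph.induceHomOfLE G (Set.compl_subset_compl.2 Set.sdiff_subset)).toHom

lemma compMap_injective_iff (i : Fin n) :
    Function.Injective (compMap G T i) ↔
      ∀ a b, a ∉ T → b ∉ T → Joined G (T \ {i}) a b → Joined G T a b := by
  constructor
  · rintro h a b ha hb ⟨ha', hb', hab⟩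
    refine ⟨ha, hb, SimpleGraph.ConnectedComponent.exact (@h
      ((G.induce Tᶜ).connectedComponentMk ⟨a, ha⟩) ((G.induce Tᶜ).connectedComponentMk ⟨b, hb⟩) ?_)⟩
    exact SimpleGraph.ConnectedComponent.sound hab
  · intro h A B
    refine SimpleGraph.ConnectedComponent.ind₂ ?_ A B
    rintro ⟨a, ha⟩ ⟨b, hb⟩ hab
    obtain ⟨_, _, h'⟩ := h a b ha hb ⟨_, _, SimpleGraph.ConnectedComponent.exact hab⟩
    exact SimpleGraph.ConnectedComponent.sound h'

/-- If some neighbour of `i` lies outside `T`, then the component of `i` in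
`G - (T \ {i})` also contains a vertex outside `T`, so every component is hit. -/
lemma compMap_surjective {i a : Fin n} (ha : a ∉ T) (hia : G.Adj i a) :
    Function.Surjective (compMap G T i) := by
  intro B
  refine SimpleGraph.ConnectedComponent.ind ?_ B
  rintro ⟨v, hv⟩
  by_cases hvi : v = i
  · subst hvi
    refine ⟨(G.induce Tᶜ).connectedComponentMk ⟨a, ha⟩, ?_⟩
    have hadj : (G.induce (T \ {v})ᶜ).Adj ⟨a, fun h => ha h.1⟩ ⟨v, hv⟩ := hia.symm
    exact SimpleGraph.ConnectedComponent.sound hadj.reachable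
  · exact ⟨(G.induce Tᶜ).connectedComponentMk ⟨v, fun h => hv ⟨h, hvi⟩⟩, rfl⟩

lemma joined_of_no_neighbor {i : Fin n} (hi : ∀ a, a ∉ T → ¬ G.Adj i a) {a b : Fin n}
    (ha : a ∉ T) (h : Joined G (T \ {i}) a b) (hb : b ∉ T) : Joined G T a b := by
  refine h.induct (fun v => v ∉ T → Joined G T a v) (fun _ _ => ⟨ha, ha, .refl _⟩) ?_ hb
  intro v w hv hw hvw ih hwT
  have hvT : v ∉ T := by
    intro hvT
    obtain rfl : v = i := by
      by_contra hne
      exact hv ⟨hvT, hne⟩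
    exact hi w hwT hvw
  obtain ⟨h1, h2, h3⟩ := ih hvT
  have hadj : (G.induce Tᶜ).Adj ⟨v, h2⟩ ⟨w, hwT⟩ := hvw
  exact ⟨h1, hwT, h3.trans hadj.reachable⟩

lemma ncomp_lt_iff (i : Fin n) :
    ncomp G (T \ {i}) < ncomp G T ↔
      ¬ ∀ a b, a ∉ T → b ∉ T → Joined G (T \ {i}) a b → Joined G T a b := by
  have : Finite (G.induce Tᶜ).ConnectedComponent := Quot.finite _
  have : Finite (G.induce (T \ {i})ᶜ).ConnectedComponent := Quot.finite _
  constructor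
  · intro h hinj
    exact absurd (Nat.card_le_card_of_injective _ ((compMap_injective_iff i).2 hinj)) h.not_ge
  · intro h
    by_contra hlt
    refine h ?_
    by_cases hnb : ∀ a, a ∉ T → ¬ G.Adj i a
    · exact fun a b ha hb hab => joined_of_no_neighbor hnb ha hab hb
    · push Not at hnb
      obtain ⟨a, ha, hia⟩ := hnb
      have hs := compMap_surjective ha hia
      have hcard := (Nat.card_le_card_of_surjective _ hs).antisymm (not_lt.1 hlt)
      exact (compMap_injective_iff i).1
        ((Nat.bijective_iff_surjective_and_card _).2 ⟨hs, hcard.symm⟩).1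

end Components

/-- Let `G` be a connected simple graph on `[n]`.  For `T ⊆ [n]`,
the prime ideal `P_T(G)` is a minimal prime of the binomial edge ideal `J_G` if and
only if either `T = ∅`, or `T ≠ ∅` and for each `i ∈ T` one has `c(T∖{i}) < c(T)`. -/
theorem statement0 (K : Type) [Field K] (n : ℕ) (G : SimpleGraph (Fin n))
    (hG : G.Connected) (T : Set (Fin n)) :
    PT K G T ∈ (bei K G).minimalPrimes ↔
      (T = ∅ ∨ (T ≠ ∅ ∧ ∀ i ∈ T, ncomp G (T \ {i}) < ncomp G T)) := by
  have hcond : (T = ∅ ∨ (T ≠ ∅ ∧ ∀ i ∈ T, ncomp G (T \ {i}) < ncomp G T)) ↔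
      ∀ i ∈ T, ncomp G (T \ {i}) < ncomp G T := by
    rcases eq_or_ne T ∅ with rfl | hT
    · simp
    · simp [hT]
  rw [hcond, PT_mem_minimalPrimes_iff]
  constructor
  · intro h i hi
    rw [ncomp_lt_iff]
    intro hcon
    have := h (T \ {i}) (PT_le_PT_iff.2 ⟨Set.sdiff_subset, hcon⟩)
    rw [← this] at hi
    exact hi.2 rfl
  · intro h S hS
    obtain ⟨hST, hJ⟩ := PT_le_PT_iff.1 hS
    refine hST.antisymm fun i hi => ?_
    by_contra hiS
    have hsub : S ⊆ T \ {i} := fun j hj => ⟨hST hj, fun e => hiS (e ▸ hj)⟩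
    exact (ncomp_lt_iff i).1 (h i hi) fun a b ha hb hab => hJ a b ha hb (hab.mono hsub)

end BEIPaper
end
end

section
/- If S/I is an approximately Cohen-Macaulay ring, then dim S/p ≥ dim S/I − 1 for every associated prime p ∈ Ass(S/I). -/
/-!
Let `p = Ann(u)` be an associated prime of `S/I`, with `u` the class of `g`, and let `f` be the
homogeneous form of the approximately Cohen-Macaulay property. Comparing lowest-degree components
shows that for `m` large the annihilator of the image of `u` in `S/J`, `J = I + (f ^ m)`, consists
of polynomials without constant term (`exists_pow_constantCoeff_eq_zero`). This annihilator
contains `p`, so the cyclic submodule `N` generated by the image of `u` has `dim N ≤ dim S/p`.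

On the other hand `N` is supported at the irrelevant ideal, so
`depth S/J ≤ dim N` (`length_le_ringKrullDim_of_isWeaklyRegular`, the usual induction on a regular
sequence, with Nakayama's lemma replaced by the determinant trick so that no localization is
needed). As `S/J` is Cohen-Macaulay of dimension `dim S/I - 1`, the inequality follows.
-/

open MvPolynomial CategoryTheory Opposite

noncomputable section

namespace BEIPaper

attribute [local instance] MvPolynomial.gradedAlgebra

/-- A product expands by degree: its degree-`j` component is the sum over `a + b = j` of the
products of the degree-`a` and degree-`b` components of the factors. -/
lemma homogeneousComponent_mul_eq_sum {K σ : Type} [Field K] (s g : MvPolynomial σ K) (j : ℕ) :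
    homogeneousComponent j (s * g) =
      ∑ ab ∈ Finset.HasAntidiagonal.antidiagonal j,
        homogeneousComponent ab.1 s * homogeneousComponent ab.2 g := by
  have h := DirectSum.coe_mul_apply_eq_sum_antidiagonal (A := homogeneousSubmodule σ K)
    (DirectSum.decompose (homogeneousSubmodule σ K) s)
    (DirectSum.decompose (homogeneousSubmodule σ K) g) j
  rw [← DirectSum.decompose_mul] at h
  have key : ∀ (φ : MvPolynomial σ K) (i : ℕ),
      (DirectSum.decompose (homogeneousSubmodule σ K) φ i : MvPolynomial σ K) =
        homogeneousComponent i φ := decomposition.decompose'_apply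
  simpa only [key] using h

/-- The graded form of the Krull intersection argument. If `g ∉ I`, with lowest component outside
`I` in degree `j`, then for `m > j` a relation `s * g ∈ I + (f ^ m)` gives in degree `j` that
`s(0) * g_j ∈ I`, so `s` has no constant term. -/
lemma exists_pow_constantCoeff_eq_zero {K σ : Type} [Field K] {I : Ideal (MvPolynomial σ K)}
    (hI : I.IsHomogeneous (homogeneousSubmodule σ K)) {d : ℕ} (hd : 0 < d)
    {f : MvPolynomial σ K} (hf : f.IsHomogeneous d) {g : MvPolynomial σ K} (hg : g ∉ I) :
    ∃ m : ℕ, 1 ≤ m ∧ ∀ s : MvPolynomial σ K,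
      s * g ∈ I ⊔ Ideal.span {f ^ m} → constantCoeff s = 0 := by
  classical
  have hex : ∃ j, homogeneousComponent j g ∉ I := by
    by_contra! h
    exact hg ((mem_iff_homogeneousComponent_mem hI g).2 h)
  let j := Nat.find hex
  have hj : homogeneousComponent j g ∉ I := Nat.find_spec hex
  have hlt : ∀ b < j, homogeneousComponent b g ∈ I := fun b hb =>
    not_not.1 (Nat.find_min hex hb)
  refine ⟨j + 1, by omega, fun s hs => ?_⟩
  by_contra hc
  obtain ⟨a, ha, b, hb, hab⟩ := Submodule.mem_sup.1 hs
  obtain ⟨h, rfl⟩ := Ideal.mem_span_singleton'.1 hb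
  have hb0 : homogeneousComponent j (h * f ^ (j + 1)) = 0 := by
    rw [homogeneousComponent_mul_eq_sum]
    refine Finset.sum_eq_zero fun ab hab' => ?_
    have h1 := Finset.HasAntidiagonal.mem_antidiagonal.1 hab'
    have h2 : ab.2 ≠ d * (j + 1) := by nlinarith
    rw [homogeneousComponent_of_mem ((mem_homogeneousSubmodule _ _).2 (hf.pow (j + 1))),
      if_neg h2, mul_zero]
  have hmem : homogeneousComponent j (s * g) ∈ I := by
    rw [← hab, map_add, hb0, add_zero]
    exact homogeneousComponent_mem_of_mem hI ha j
  rw [homogeneousComponent_mul_eq_sum,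
    ← Finset.add_sum_erase _ _ (show (0, j) ∈ Finset.HasAntidiagonal.antidiagonal j by simp)] at hmem
  have hrest : ∑ ab ∈ (Finset.HasAntidiagonal.antidiagonal j).erase (0, j),
      homogeneousComponent ab.1 s * homogeneousComponent ab.2 g ∈ I := by
    refine Ideal.sum_mem _ fun ab hab' => I.mul_mem_left _ (hlt _ ?_)
    obtain ⟨hne, h1⟩ := Finset.mem_erase.1 hab'
    have h1 := Finset.HasAntidiagonal.mem_antidiagonal.1 h1
    have : ab.1 ≠ 0 := fun h0 => hne (Prod.ext h0 (by simpa [h0] using h1))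
    omega
  have h3 := (Ideal.add_mem_iff_left I hrest).1 hmem
  rw [homogeneousComponent_zero] at h3
  refine hj ?_
  have h4 := I.mul_mem_left (C (coeff 0 s)⁻¹) h3
  rwa [← mul_assoc, ← C_mul, inv_mul_cancel₀ (by simpa [constantCoeff_eq] using hc), C_1,
    one_mul] at h4

/-- A localization-free form of Nakayama's lemma at the prime `m`: if `N` is supported at `m`,
`r ∈ m` and `s • N ⊆ r • N`, then `s ∈ m`. By the determinant trick the endomorphism `s` of `N` is
a root of a monic polynomial with lower coefficients in `m`, so an element of `s ^ k + m`
annihilates `N` and hence lies in `m`. -/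
lemma mem_of_smul_mem_smul {R M : Type*} [CommRing R] [AddCommGroup M] [Module R M]
    {m : Ideal R} [m.IsPrime] (N : Submodule R M) [Module.Finite R N]
    (hN : N.annihilator ≤ m) {r s : R} (hr : r ∈ m)
    (h : ∀ u ∈ N, ∃ v ∈ N, s • u = r • v) : s ∈ m := by
  obtain ⟨P, hP, -, hcoeff, hzero⟩ :=
    LinearMap.exists_monic_and_natDegree_eq_and_coeff_mem_pow_and_aeval_eq_zero
      R (algebraMap R (Module.End R N) s) m (by
        rintro _ ⟨u, rfl⟩
        obtain ⟨v, hv, huv⟩ := h u u.2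
        have : algebraMap R (Module.End R N) s u = r • (⟨v, hv⟩ : N) := Subtype.ext huv
        rw [this]
        exact Submodule.smul_mem_smul hr trivial)
  rw [Polynomial.aeval_algebraMap_apply] at hzero
  have h1 : P.eval s ∈ m := by
    refine hN (Submodule.mem_annihilator.2 fun u hu => ?_)
    have := congrArg Subtype.val (LinearMap.congr_fun hzero ⟨u, hu⟩)
    simpa using this
  rw [Polynomial.eval_eq_sum_range, Finset.sum_range_succ, hP.coeff_natDegree, one_mul] at h1
  have h2 : ∑ i ∈ Finset.range P.natDegree, P.coeff i * s ^ i ∈ m := by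
    refine Ideal.sum_mem _ fun i hi => m.mul_mem_right _ ?_
    exact Ideal.pow_le_self (by have := Finset.mem_range.1 hi; omega) (hcoeff i)
  exact Ideal.IsPrime.mem_of_pow_mem inferInstance _ ((Ideal.add_mem_iff_right m h2).1 h1)

/-- Passing from a prime `q` to an ideal containing `q` and an element outside `q` drops the
dimension of the quotient. -/
lemma ringKrullDim_quotient_add_one_le {R : Type*} [CommRing R] {q J : Ideal R} [q.IsPrime]
    (hqJ : q ≤ J) {r : R} (hrq : r ∉ q) (hrJ : r ∈ J) :
    ringKrullDim (R ⧸ J) + 1 ≤ ringKrullDim (R ⧸ q) := by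
  refine ringKrullDim_succ_le_of_surjective (Ideal.Quotient.factor hqJ)
    (Ideal.Quotient.factor_surjective hqJ) (r := Ideal.Quotient.mk q r) ?_ ?_
  · rw [mem_nonZeroDivisors_iff_ne_zero]
    exact fun h => hrq (Ideal.Quotient.eq_zero_iff_mem.1 h)
  · simpa using Ideal.Quotient.eq_zero_iff_mem.2 hrJ

lemma ringKrullDim_quotient_anti {R : Type*} [CommRing R] {J J' : Ideal R} (h : J ≤ J') :
    ringKrullDim (R ⧸ J') ≤ ringKrullDim (R ⧸ J) :=
  ringKrullDim_le_of_surjective (Ideal.Quotient.factor h) (Ideal.Quotient.factor_surjective h)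

/-- Depth is bounded by the dimension of every submodule supported at `m`: a weakly regular
sequence in the prime `m` is no longer than `dim R ⧸ Ann N`. For `r` the first element, `N` is
replaced by `N' = {u | q • u = 0}` with `q ⊆ m` associated to `N`; regularity gives
`N' ∩ r M = r N'`, so by Nakayama the image of `N'` in `M ⧸ r M` is still supported at `m`, and
its annihilator contains both `q` and `r ∉ q`. -/
lemma length_le_ringKrullDim_of_isWeaklyRegular {R : Type*} [CommRing R] [IsNoetherianRing R]
    {m : Ideal R} [m.IsPrime] (rs : List R) :
    ∀ {M : Type*} [AddCommGroup M] [Module R M] [Module.Finite R M], (∀ r ∈ rs, r ∈ m) →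
      RingTheory.Sequence.IsWeaklyRegular M rs → ∀ N : Submodule R M, N.annihilator ≤ m →
      ((rs.length : ℕ∞) : WithBot ℕ∞) ≤ ringKrullDim (R ⧸ N.annihilator) := by
  induction rs with
  | nil =>
    intro M _ _ _ _ _ N hN
    have : Nontrivial (R ⧸ N.annihilator) :=
      Ideal.Quotient.nontrivial_iff.2 fun h =>
        (inferInstance : m.IsPrime).ne_top (top_le_iff.1 (h ▸ hN))
    simpa using ringKrullDim_nonneg_of_nontrivial
  | cons r rs ih =>
    intro M _ _ _ hm hreg N hN
    obtain ⟨hr, hrs⟩ := (RingTheory.Sequence.isWeaklyRegular_cons_iff M r rs).1 hreg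
    obtain ⟨q, hq, hqm⟩ := Ideal.exists_minimalPrimes_le hN
    have hqass : IsAssociatedPrime q N :=
      Module.associatedPrimes.minimalPrimes_annihilator_subset_associatedPrimes R N hq
    have hqprime : q.IsPrime := hqass.isPrime
    obtain ⟨-, u, hu⟩ := isAssociatedPrime_iff.1 hqass
    have hmemq : ∀ a : R, a ∈ q ↔ a • (u : M) = 0 := fun a => by
      rw [hu, Submodule.mem_colon_singleton, Submodule.mem_bot, ← Submodule.coe_smul,
        Submodule.coe_eq_zero]
    let N' : Submodule R M := Submodule.torsionBySet R M q
    have hN'mem : ∀ v, v ∈ N' ↔ ∀ a ∈ q, a • v = 0 := fun v => by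
      simp [N', Submodule.mem_torsionBySet_iff]
    have huN' : (u : M) ∈ N' := (hN'mem _).2 fun a ha => (hmemq a).1 ha
    have hN' : N'.annihilator ≤ q := fun a ha =>
      (hmemq a).2 (Submodule.mem_annihilator.1 ha _ huN')
    have hrq : r ∉ q := fun h => by
      have h0 : (u : M) = 0 := hr (by simpa using (hmemq r).1 h)
      exact hqprime.ne_top ((Ideal.eq_top_iff_one _).2 ((hmemq 1).2 (by simp [h0])))
    let N'' : Submodule R (QuotSMulTop r M) := N'.map (Submodule.mkQ _)
    have hqN'' : q ≤ N''.annihilator := fun a ha => by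
      refine Submodule.mem_annihilator.2 ?_
      rintro _ ⟨v, hv, rfl⟩
      rw [← map_smul, (hN'mem v).1 hv a ha, map_zero]
    have hrN'' : r ∈ N''.annihilator := by
      refine Submodule.mem_annihilator.2 ?_
      rintro _ ⟨v, -, rfl⟩
      rw [← map_smul, Submodule.mkQ_apply, Submodule.Quotient.mk_eq_zero]
      exact Submodule.smul_mem_pointwise_smul _ _ _ trivial
    have hN''m : N''.annihilator ≤ m := fun s hs => by
      refine mem_of_smul_mem_smul N' (hN'.trans hqm) (hm r (by simp)) fun w hw => ?_
      have h0 := Submodule.mem_annihilator.1 hs _ ⟨w, hw, rfl⟩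
      rw [← map_smul, Submodule.mkQ_apply, Submodule.Quotient.mk_eq_zero] at h0
      obtain ⟨v, -, hv⟩ := (Submodule.mem_smul_pointwise_iff_exists _ _ _).1 h0
      refine ⟨v, (hN'mem v).2 fun a ha => hr ?_, hv.symm⟩
      simp only [smul_zero]
      rw [smul_comm, hv, smul_comm, (hN'mem w).1 hw a ha, smul_zero]
    have h1 := ih (fun a ha => hm a (by simp [ha])) hrs N'' hN''m
    calc (((r :: rs).length : ℕ∞) : WithBot ℕ∞)
        = ((rs.length : ℕ∞) : WithBot ℕ∞) + 1 := by simp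
      _ ≤ ringKrullDim (R ⧸ N''.annihilator) + 1 := by gcongr
      _ ≤ ringKrullDim (R ⧸ q) := ringKrullDim_quotient_add_one_le hqN'' hrq hrN''
      _ ≤ ringKrullDim (R ⧸ N.annihilator) := ringKrullDim_quotient_anti hq.le

/-- If `S/I` is an approximately Cohen-Macaulay ring, then
`dim S/p ≥ dim S/I − 1` for every associated prime `p ∈ Ass(S/I)`. -/
theorem statement2 (K : Type) [Field K] (n : ℕ)
    (I : Ideal (MvPolynomial (Fin n ⊕ Fin n) K))
    (hI : I.IsHomogeneous (homogeneousSubmodule (Fin n ⊕ Fin n) K))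
    (hACM : IsACM K I) :
    ∀ p ∈ associatedPrimes (MvPolynomial (Fin n ⊕ Fin n) K)
        (MvPolynomial (Fin n ⊕ Fin n) K ⧸ I),
      ringKrullDim (MvPolynomial (Fin n ⊕ Fin n) K ⧸ I) ≤
        ringKrullDim (MvPolynomial (Fin n ⊕ Fin n) K ⧸ p) + 1 := by
  intro p hp
  obtain ⟨d, f, hd, hf, hCM⟩ := hACM
  obtain ⟨hpp, u, hu⟩ := isAssociatedPrime_iff.1 hp
  obtain ⟨g, rfl⟩ := Ideal.Quotient.mk_surjective u
  have hmemp : ∀ a, a ∈ p → a * g ∈ I := fun a ha => by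
    rw [hu, Submodule.mem_colon_singleton, Submodule.mem_bot] at ha
    exact Ideal.Quotient.eq_zero_iff_mem.1 ha
  have hg : g ∉ I := fun h => by
    refine hpp.ne_top ?_
    rw [hu, Ideal.Quotient.eq_zero_iff_mem.2 h]
    simp
  obtain ⟨m, hm, hs⟩ := exists_pow_constantCoeff_eq_zero hI hd hf hg
  obtain ⟨hdepth, hdim⟩ := hCM m hm
  set J := I ⊔ Ideal.span {f ^ m} with hJ
  let N : Submodule (MvPolynomial (Fin n ⊕ Fin n) K) (MvPolynomial (Fin n ⊕ Fin n) K ⧸ J) :=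
    Submodule.span _ {Ideal.Quotient.mk J g}
  have hNmem : ∀ a, a ∈ N.annihilator ↔ a * g ∈ J := fun a => by
    rw [Submodule.mem_annihilator_span_singleton, ← Ideal.Quotient.eq_zero_iff_mem, map_mul]
    rfl
  have hNm : N.annihilator ≤ RingHom.ker (constantCoeff (R := K) (σ := Fin n ⊕ Fin n)) :=
    fun a ha => hs a ((hNmem a).1 ha)
  have hpN : p ≤ N.annihilator := fun a ha =>
    (hNmem a).2 (Ideal.mem_sup_left (hmemp a ha))
  have hmI : mIdeal K (Fin n ⊕ Fin n) ≤ RingHom.ker constantCoeff := by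
    rw [mIdeal, Ideal.span_le]
    rintro _ ⟨i, rfl⟩
    simp
  have : (RingHom.ker (constantCoeff (R := K) (σ := Fin n ⊕ Fin n))).IsPrime :=
    RingHom.ker_isPrime _
  have hle : ((depth (mIdeal K (Fin n ⊕ Fin n)) (MvPolynomial (Fin n ⊕ Fin n) K ⧸ J) : ℕ∞) :
      WithBot ℕ∞) ≤ ringKrullDim (MvPolynomial (Fin n ⊕ Fin n) K ⧸ p) := by
    have : Nontrivial (MvPolynomial (Fin n ⊕ Fin n) K ⧸ p) :=
      Ideal.Quotient.nontrivial_iff.2 hpp.ne_top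
    -- The dimension is not `⊥`, so the supremum can be bounded inside `ℕ∞`.
    obtain ⟨e, he⟩ := WithBot.ne_bot_iff_exists.1
      (ne_bot_of_le_ne_bot WithBot.zero_ne_bot (ringKrullDim_nonneg_of_nontrivial
        (R := MvPolynomial (Fin n ⊕ Fin n) K ⧸ p)))
    rw [← he, WithBot.coe_le_coe, depth]
    refine sSup_le ?_
    rintro _ ⟨rs, rfl, hrs, hreg⟩
    rw [← WithBot.coe_le_coe, he]
    exact (length_le_ringKrullDim_of_isWeaklyRegular rs (fun r hr => hmI (hrs r hr))
      hreg.toIsWeaklyRegular N hNm).trans (ringKrullDim_quotient_anti hpN)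
  rw [← hdim]
  rw [IsCMQuot] at hdepth
  rw [← hdepth]
  gcongr

end BEIPaper
end
end
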